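/- Let ∑_{i=1}^k αᵢ sᵢ ≥ 1 with α ∈ ℝ^k, α ≥ 0, be a facet-defining inequality for conv(P([r¹,…,r^k],f)) such that L_α is not contained in any split set. Suppose the cone generated by {r¹,…,r^k} is two-dimensional but is not all of ℝ². Then there exist a column r^{k+1} ∈ ℚ² and a coefficient α_{k+1} > 0 such that: (i) the cone generated by {r¹,…,r^k,r^{k+1}} equals ℝ²; (ii) ∑_{i=1}^{k+1} αᵢ sᵢ ≥ 1 is a facet-defining inequality for conv(P([r¹,…,r^k,r^{k+1}],f)); and (iii) the induced lattice-free set of ∑_{i=1}^{k+1} αᵢ sᵢ ≥ 1, namely conv{f + rⁱ/αᵢ : 1 ≤ i ≤ k+1} (all αᵢ being positive), is not a triangle of type T¹. -/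

import Mathlib

open Set Pointwise

abbrev Pt : Type := Fin 2 → ℝ

def IsIntPt (x : Pt) : Prop := ∀ j, ∃ z : ℤ, x j = (z : ℝ)

def IsRatPt (x : Pt) : Prop := ∀ j, ∃ q : ℚ, x j = (q : ℝ)

/-- The mixed-integer set `P(R,f)`. -/
def mixedP (k : ℕ) (r : Fin k → Pt) (f : Pt) : Set (Pt × (Fin k → ℝ)) :=
  {p | IsIntPt p.1 ∧ (∀ i, 0 ≤ p.2 i) ∧ p.1 = f + ∑ i, p.2 i • r i}

/-- The linear relaxation `P(R,f)⁰`. -/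
def relaxP (k : ℕ) (r : Fin k → Pt) (f : Pt) : Set (Pt × (Fin k → ℝ)) :=
  {p | (∀ i, 0 ≤ p.2 i) ∧ p.1 = f + ∑ i, p.2 i • r i}

/-- The convex cone generated by a set (all nonnegative combinations). -/
def coneGen (S : Set Pt) : Set Pt :=
  {x | ∃ (n : ℕ) (c : Fin n → ℝ) (v : Fin n → Pt),
    (∀ j, 0 ≤ c j) ∧ (∀ j, v j ∈ S) ∧ x = ∑ j, c j • v j}

/-- The induced lattice-free set `L_α`. -/
def inducedSet (k : ℕ) (r : Fin k → Pt) (f : Pt) (α : Fin k → ℝ) : Set Pt :=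
  convexHull ℝ ({f} ∪ {x | ∃ i, 0 < α i ∧ x = f + (α i)⁻¹ • r i}) +
    coneGen {x | ∃ i, α i = 0 ∧ x = r i}

def LatticeFree (S : Set Pt) : Prop := ∀ x ∈ interior S, ¬ IsIntPt x

/-- Validity of `∑ αᵢ sᵢ ≥ γ` for `conv(P(R,f))`. -/
def ValidIneq (k : ℕ) (r : Fin k → Pt) (f : Pt) (α : Fin k → ℝ) (γ : ℝ) : Prop :=
  ∀ p ∈ mixedP k r f, γ ≤ ∑ i, α i * p.2 i

noncomputable def affDim {V : Type*} [AddCommGroup V] [Module ℝ V] (S : Set V) : ℕ :=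
  Module.finrank ℝ (affineSpan ℝ S).direction

/-- Facet-defining inequality: valid and its face of the closed convex hull has
affine dimension exactly one less. -/
def IsFacet (k : ℕ) (r : Fin k → Pt) (f : Pt) (α : Fin k → ℝ) (γ : ℝ) : Prop :=
  ValidIneq k r f α γ ∧
  affDim {p ∈ closure (convexHull ℝ (mixedP k r f)) | ∑ i, α i * p.2 i = γ} + 1 =
    affDim (convexHull ℝ (mixedP k r f))

def splitClosure (k : ℕ) (C : Set (Pt × (Fin k → ℝ))) : Set (Pt × (Fin k → ℝ)) :=
  ⋂ (π : Fin 2 → ℤ) (π₀ : ℤ),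
    convexHull ℝ ((C ∩ {p | ∑ j, (π j : ℝ) * p.1 j ≤ (π₀ : ℝ)}) ∪
      (C ∩ {p | (π₀ : ℝ) + 1 ≤ ∑ j, (π j : ℝ) * p.1 j}))

def closures (k : ℕ) (r : Fin k → Pt) (f : Pt) : ℕ → Set (Pt × (Fin k → ℝ))
  | 0 => relaxP k r f
  | n + 1 => splitClosure k (closures k r f n)

/-- The split rank of `∑ αᵢ sᵢ ≥ γ` w.r.t. `P(R,f)⁰`: least `j` such that the
inequality is valid on the `j`-th split closure, `⊤` if none exists. -/
noncomputable def splitRank (k : ℕ) (r : Fin k → Pt) (f : Pt) (α : Fin k → ℝ) (γ : ℝ) : ℕ∞ :=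
  sInf {j : ℕ∞ | ∃ n : ℕ, j = (n : ℕ∞) ∧ ∀ p ∈ closures k r f n, γ ≤ ∑ i, α i * p.2 i}

def IsSplitSet (S : Set Pt) : Prop :=
  ∃ (π : Fin 2 → ℤ) (π₀ : ℤ), π ≠ 0 ∧
    S = {x : Pt | (π₀ : ℝ) ≤ ∑ j, (π j : ℝ) * x j ∧ ∑ j, (π j : ℝ) * x j ≤ (π₀ : ℝ) + 1}

/-- Triangle of type `T¹`. -/
def IsT1 (S : Set Pt) : Prop :=
  ∃ v : Fin 3 → Pt, AffineIndependent ℝ v ∧ (∀ i, IsIntPt (v i)) ∧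
    S = convexHull ℝ (Set.range v) ∧
    ∀ i j, i ≠ j → ∃! z, z ∈ openSegment ℝ (v i) (v j) ∧ IsIntPt z

/-- Triangle of type `T^{2A}`. -/
def IsT2A (S : Set Pt) : Prop :=
  ∃ v0 v1 v2 : Pt, AffineIndependent ℝ ![v0, v1, v2] ∧ ¬ IsIntPt v0 ∧
    S = convexHull ℝ {v0, v1, v2} ∧
    (∃ z1 z2 : Pt, z1 ≠ z2 ∧ IsIntPt z1 ∧ IsIntPt z2 ∧
      z1 ∈ segment ℝ v1 v2 ∧ z2 ∈ segment ℝ v1 v2) ∧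
    (∃! z, z ∈ openSegment ℝ v0 v1 ∧ IsIntPt z) ∧
    (∃! z, z ∈ openSegment ℝ v0 v2 ∧ IsIntPt z)

/-- Triangle of type `T^{2B}`. -/
def IsT2B (S : Set Pt) : Prop :=
  ∃ v0 v1 v2 : Pt, AffineIndependent ℝ ![v0, v1, v2] ∧ ¬ IsIntPt v0 ∧
    S = convexHull ℝ {v0, v1, v2} ∧
    (∃ z1 z2 : Pt, z1 ≠ z2 ∧ IsIntPt z1 ∧ IsIntPt z2 ∧
      z1 ∈ segment ℝ v1 v2 ∧ z2 ∈ segment ℝ v1 v2) ∧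
    (∃! z, z ∈ openSegment ℝ v0 v1 ∧ IsIntPt z) ∧
    (∀ z ∈ openSegment ℝ v0 v2, ¬ IsIntPt z)

/-- Triangle of type `T³`. -/
def IsT3 (S : Set Pt) : Prop :=
  ∃ v0 v1 v2 : Pt, AffineIndependent ℝ ![v0, v1, v2] ∧
    ¬ IsIntPt v0 ∧ ¬ IsIntPt v1 ∧ ¬ IsIntPt v2 ∧
    S = convexHull ℝ {v0, v1, v2} ∧
    (∃! z, z ∈ openSegment ℝ v0 v1 ∧ IsIntPt z) ∧
    (∃! z, z ∈ openSegment ℝ v1 v2 ∧ IsIntPt z) ∧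
    (∃! z, z ∈ openSegment ℝ v0 v2 ∧ IsIntPt z) ∧
    (∀ z, IsIntPt z → z ∈ frontier S →
      z ∈ openSegment ℝ v0 v1 ∨ z ∈ openSegment ℝ v1 v2 ∨ z ∈ openSegment ℝ v0 v2)

/-- A quadrilateral with vertices `v 0, v 1, v 2, v 3` in cyclic order; each `vᵢ`
is an extreme point of the hull and each side lies on the boundary. -/
def IsQuadWith (S : Set Pt) (v : Fin 4 → Pt) : Prop :=
  S = convexHull ℝ (Set.range v) ∧
  (∀ i, v i ∈ Set.extremePoints ℝ S) ∧
  (∀ i : Fin 4, segment ℝ (v i) (v (i + 1)) ⊆ frontier S)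

/-- Quadrilateral of type `Q¹`. -/
def IsQ1 (S : Set Pt) : Prop :=
  ∃ v : Fin 4 → Pt, IsQuadWith S v ∧
    (∃ z1 z2 : Pt, z1 ≠ z2 ∧ IsIntPt z1 ∧ IsIntPt z2 ∧
      z1 ∈ segment ℝ (v 0) (v 1) ∧ z2 ∈ segment ℝ (v 0) (v 1)) ∧
    (∃ j : Fin 4, j ≠ 0 ∧
      (∀ i : Fin 4, i ≠ 0 → i ≠ j → ∃ z, IsIntPt z ∧ z ∈ segment ℝ (v i) (v (i + 1))) ∧
      (∀ z ∈ openSegment ℝ (v j) (v (j + 1)), ¬ IsIntPt z)) ∧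
    (∃ T : Set Pt, (IsT1 T ∨ IsT2A T) ∧ S ⊆ T)

/-- Quadrilateral of type `Q²`. -/
def IsQ2 (S : Set Pt) : Prop :=
  ∃ v : Fin 4 → Pt, IsQuadWith S v ∧ (∀ i, ¬ IsIntPt (v i)) ∧
    ∀ i : Fin 4, ∃! z, z ∈ openSegment ℝ (v i) (v (i + 1)) ∧ IsIntPt z

/-! ### Integer points and rational directions in the plane -/

/-- The vector of `ℝ²` with integer entries `p` and `q`. -/
def intVec (p q : ℤ) : Pt := ![(p : ℝ), (q : ℝ)]

/-- The linear form vanishing on `intVec p q`. -/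
noncomputable def conormal (p q : ℤ) : Pt →ₗ[ℝ] ℝ :=
  (p : ℝ) • LinearMap.proj 1 - (q : ℝ) • LinearMap.proj 0

lemma conormal_apply (p q : ℤ) (x : Pt) : conormal p q x = p * x 1 - q * x 0 := by
  simp [conormal]

lemma conormal_intVec (p q : ℤ) : conormal p q (intVec p q) = 0 := by
  simp [conormal_apply, intVec]; ring

lemma intVec_ne_zero {p q : ℤ} (h : IsCoprime p q) : intVec p q ≠ 0 := by
  intro h0
  have hp : p = 0 := by simpa [intVec] using congrFun h0 0
  have hq : q = 0 := by simpa [intVec] using congrFun h0 1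
  subst hp hq
  exact not_isCoprime_zero_zero h

lemma IsIntPt.add {x y : Pt} (hx : IsIntPt x) (hy : IsIntPt y) : IsIntPt (x + y) := fun j => by
  obtain ⟨a, ha⟩ := hx j
  obtain ⟨b, hb⟩ := hy j
  exact ⟨a + b, by simp [ha, hb]⟩

lemma isIntPt_intVec (p q : ℤ) : IsIntPt (intVec p q) := fun j => by
  fin_cases j
  exacts [⟨p, rfl⟩, ⟨q, rfl⟩]

lemma IsIntPt.zsmul {x : Pt} (hx : IsIntPt x) (n : ℤ) : IsIntPt ((n : ℝ) • x) := fun j => by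
  obtain ⟨a, ha⟩ := hx j
  exact ⟨n * a, by simp [ha]⟩

lemma IsIntPt.conormal {x : Pt} (hx : IsIntPt x) (p q : ℤ) :
    ∃ m : ℤ, conormal p q x = m := by
  obtain ⟨a, ha⟩ := hx 0
  obtain ⟨b, hb⟩ := hx 1
  exact ⟨p * b - q * a, by simp [conormal_apply, ha, hb]⟩

lemma finite_isIntPt_abs_le (B : ℝ) : {x : Pt | IsIntPt x ∧ ∀ j, |x j| ≤ B}.Finite := by
  refine ((Set.finite_Icc (fun _ : Fin 2 => -⌈B⌉) (fun _ => ⌈B⌉)).image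
    (fun z : Fin 2 → ℤ => fun j => (z j : ℝ))).subset ?_
  rintro x ⟨hx, hB⟩
  choose z hz using hx
  refine ⟨z, ⟨fun j => ?_, fun j => ?_⟩, funext fun j => (hz j).symm⟩
  · have h := neg_le_of_abs_le (hB j)
    have h2 := Int.le_ceil B
    have h3 : ((-⌈B⌉ : ℤ) : ℝ) ≤ z j := by rw [← hz j]; push_cast; linarith
    exact_mod_cast h3
  · have h := le_of_abs_le (hB j)
    have h2 := Int.le_ceil B
    have h3 : (z j : ℝ) ≤ (⌈B⌉ : ℤ) := by rw [← hz j]; linarith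
    exact_mod_cast h3

/-- A line with primitive direction at an integral level contains integer points arbitrarily far
in that direction. -/
lemma exists_isIntPt_add_smul {p q : ℤ} (h : IsCoprime p q) {x : Pt} {m : ℤ}
    (hx : conormal p q x = m) (T : ℝ) : ∃ t, T < t ∧ IsIntPt (x + t • intVec p q) := by
  obtain ⟨u, v, huv⟩ := h
  have huv' : (u : ℝ) * p + v * q = 1 := by exact_mod_cast huv
  rw [conormal_apply] at hx
  obtain ⟨n, hn⟩ := exists_int_gt (T + (u * x 0 + v * x 1))
  refine ⟨n - (u * x 0 + v * x 1), by linarith, fun j => ?_⟩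
  fin_cases j
  · refine ⟨-v * m + n * p, ?_⟩
    simp only [intVec, Fin.zero_eta, Pi.add_apply, Pi.smul_apply, Matrix.cons_val_zero, smul_eq_mul]
    push_cast
    linear_combination (-(v : ℝ)) * hx - x 0 * huv'
  · refine ⟨u * m + n * q, ?_⟩
    simp only [intVec, Fin.mk_one, Pi.add_apply, Pi.smul_apply, Matrix.cons_val_one, smul_eq_mul,
      Matrix.cons_val_fin_one]
    push_cast
    linear_combination (u : ℝ) * hx - x 1 * huv'

lemma IsRatPt.exists_nat_smul {v : Pt} (hv : IsRatPt v) :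
    ∃ N : ℕ, 0 < N ∧ IsIntPt ((N : ℝ) • v) := by
  choose c hc using hv
  refine ⟨(c 0).den * (c 1).den, Nat.mul_pos (c 0).den_pos (c 1).den_pos, fun j => ?_⟩
  have h (x : ℚ) : (x.den : ℝ) * x = x.num := by exact_mod_cast x.den_mul_eq_num
  fin_cases j
  · refine ⟨(c 0).num * (c 1).den, ?_⟩
    simp only [Fin.zero_eta, Pi.smul_apply, smul_eq_mul, hc]
    push_cast
    rw [← h]; ring
  · refine ⟨(c 1).num * (c 0).den, ?_⟩
    simp only [Fin.mk_one, Pi.smul_apply, smul_eq_mul, hc]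
    push_cast
    rw [← h]; ring

lemma exists_primitive_of_ne_zero {a b : ℤ} (h : a ≠ 0 ∨ b ≠ 0) :
    ∃ p q g : ℤ, IsCoprime p q ∧ 0 < g ∧ a = g * p ∧ b = g * q := by
  have hg : 0 < Int.gcd a b := by
    rcases h with h | h
    · exact Int.gcd_pos_of_ne_zero_left _ h
    · exact Int.gcd_pos_of_ne_zero_right _ h
  obtain ⟨p, q, hpq, ha, hb⟩ := Int.exists_gcd_one hg
  exact ⟨p, q, Int.gcd a b, Int.isCoprime_iff_gcd_eq_one.2 hpq, by exact_mod_cast hg,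
    by linarith, by linarith⟩

lemma IsRatPt.exists_primitive {v : Pt} (hv : IsRatPt v) (h0 : v ≠ 0) :
    ∃ (p q : ℤ) (c : ℝ), IsCoprime p q ∧ 0 < c ∧ v = c • intVec p q := by
  obtain ⟨N, hN, hi⟩ := hv.exists_nat_smul
  have hN' : (0 : ℝ) < N := by exact_mod_cast hN
  choose z hz using hi
  have hz' (j) : v j = (N : ℝ)⁻¹ * z j := by
    rw [← hz j, Pi.smul_apply, smul_eq_mul, inv_mul_cancel_left₀ hN'.ne']
  have hne : z 0 ≠ 0 ∨ z 1 ≠ 0 := by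
    by_contra! hcon
    apply h0
    funext j
    fin_cases j
    · simp [hz', hcon.1]
    · simp [hz', hcon.2]
  obtain ⟨p, q, g, hpq, hg, ha, hb⟩ := exists_primitive_of_ne_zero hne
  have hg' : (0 : ℝ) < g := by exact_mod_cast hg
  refine ⟨p, q, (N : ℝ)⁻¹ * g, hpq, by positivity, ?_⟩
  funext j
  fin_cases j
  · simp [hz', ha, intVec, mul_assoc]
  · simp [hz', hb, intVec, mul_assoc]

/-- Any open cone spanned by two independent rational vectors contains a primitive direction along
which the line through `f` misses the integer points. -/
lemma exists_primitive_neg_cone {u v f : Pt} (hu : IsRatPt u) (hv : IsRatPt v)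
    (huv : u 0 * v 1 - u 1 * v 0 ≠ 0) (hf : ¬ IsIntPt f) :
    ∃ (p q : ℤ) (c d : ℝ), IsCoprime p q ∧ 0 < c ∧ 0 < d ∧
      c • u + d • v + intVec p q = 0 ∧ ∀ m : ℤ, conormal p q f ≠ m := by
  obtain ⟨M, hM, hMu⟩ := hu.exists_nat_smul
  obtain ⟨M', hM', hMv⟩ := hv.exists_nat_smul
  have hM0 : (1 : ℝ) ≤ M := by exact_mod_cast hM
  have hM0' : (1 : ℝ) ≤ M' := by exact_mod_cast hM'
  choose a ha using hMu
  choose b hb using hMv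
  simp only [Pi.smul_apply, smul_eq_mul] at ha hb
  set D := u 0 * v 1 - u 1 * v 0 with hD
  obtain ⟨n, hn⟩ := exists_nat_gt (|v 0 / D| + |v 1 / D| + |u 0 / D| + |u 1 / D|)
  have key : ∃ x y : ℤ, (|x| ≤ 1 ∧ |y| ≤ 1) ∧
      ∀ m : ℤ, conormal (-n * (a 0 + b 0) + x) (-n * (a 1 + b 1) + y) f ≠ m := by
    by_contra! hcon
    obtain ⟨m₀, h₀⟩ := hcon 0 0 (by simp)
    obtain ⟨m₁, h₁⟩ := hcon 1 0 (by simp)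
    obtain ⟨m₂, h₂⟩ := hcon 0 1 (by simp)
    simp only [conormal_apply] at h₀ h₁ h₂
    push_cast at h₀ h₁ h₂
    apply hf
    intro j
    fin_cases j
    · refine ⟨m₀ - m₂, ?_⟩
      push_cast
      linarith
    · refine ⟨m₁ - m₀, ?_⟩
      push_cast
      linarith
  obtain ⟨x, y, ⟨hx, hy⟩, hxy⟩ := key
  have hx' : |(x : ℝ)| ≤ 1 := by exact_mod_cast hx
  have hy' : |(y : ℝ)| ≤ 1 := by exact_mod_cast hy
  have bound (s t : ℝ) : |(x * s - y * t)| ≤ |s| + |t| := by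
    calc |(x * s - y * t)| ≤ |x * s| + |y * t| := abs_sub _ _
      _ ≤ 1 * |s| + 1 * |t| := by rw [abs_mul, abs_mul]; gcongr
      _ = _ := by ring
  have h1 := le_of_abs_le (bound (v 1 / D) (v 0 / D))
  have h2 := neg_le_of_abs_le (bound (u 1 / D) (u 0 / D))
  have hnM : (n : ℝ) ≤ n * M := le_mul_of_one_le_right (by positivity) hM0
  have hnM' : (n : ℝ) ≤ n * M' := le_mul_of_one_le_right (by positivity) hM0'
  have p0 := abs_nonneg (v 0 / D)
  have p1 := abs_nonneg (v 1 / D)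
  have p2 := abs_nonneg (u 0 / D)
  have p3 := abs_nonneg (u 1 / D)
  set A := -n * (a 0 + b 0) + x with hA
  set B := -n * (a 1 + b 1) + y with hB
  have hAB : A ≠ 0 ∨ B ≠ 0 := by
    by_contra! h
    exact hxy 0 (by simp [h.1, h.2, conormal_apply])
  obtain ⟨p, q, g, hpq, hg, hAp, hBq⟩ := exists_primitive_of_ne_zero hAB
  have hg' : (0 : ℝ) < g := by exact_mod_cast hg
  refine ⟨p, q, (n * M - (x * (v 1 / D) - y * (v 0 / D))) / g,
    (n * M' + (x * (u 1 / D) - y * (u 0 / D))) / g, hpq, div_pos (by linarith) hg',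
    div_pos (by linarith) hg', ?_, fun m hm => hxy (g * m) ?_⟩
  · have hAr : (g : ℝ) * p = -n * (M * u 0 + M' * v 0) + x := by
      rw [ha, hb]; exact_mod_cast (hAp.symm.trans hA)
    have hBr : (g : ℝ) * q = -n * (M * u 1 + M' * v 1) + y := by
      rw [ha, hb]; exact_mod_cast (hBq.symm.trans hB)
    funext j
    fin_cases j
    · simp only [intVec, Fin.zero_eta, Pi.add_apply, Pi.smul_apply, Matrix.cons_val_zero,
        smul_eq_mul, Pi.zero_apply]
      have : (p : ℝ) = (-n * (M * u 0 + M' * v 0) + x) / g := by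
        rw [eq_div_iff hg'.ne']; linarith
      rw [this]
      field_simp
      rw [hD]; ring
    · simp only [intVec, Fin.mk_one, Pi.add_apply, Pi.smul_apply, Matrix.cons_val_one,
        Matrix.cons_val_fin_one, smul_eq_mul, Pi.zero_apply]
      have : (q : ℝ) = (-n * (M * u 1 + M' * v 1) + y) / g := by
        rw [eq_div_iff hg'.ne']; linarith
      rw [this]
      field_simp
      rw [hD]; ring
  · rw [hAp, hBq, conormal_apply]
    rw [conormal_apply] at hm
    push_cast
    linear_combination (g : ℝ) * hm

/-! ### Reduction of validity to pairs of rays -/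

lemma exists_dual_of_pair {u v w : Pt} (hw : w ≠ 0) {a b : ℝ} (ha : 0 ≤ a) (hb : 0 ≤ b)
    (h : ∀ c d : ℝ, 0 ≤ c → 0 ≤ d → c • u + d • v = w → 1 ≤ c * a + d * b) :
    ∃ y : Pt, y ⬝ᵥ u ≤ a ∧ y ⬝ᵥ v ≤ b ∧ 1 ≤ y ⬝ᵥ w := by
  have ext2 {x y : Pt} (h0 : x 0 = y 0) (h1 : x 1 = y 1) : x = y := by
    funext j
    fin_cases j
    exacts [h0, h1]
  have h' (c d : ℝ) (hc : 0 ≤ c) (hd : 0 ≤ d) (e0 : c * u 0 + d * v 0 = w 0)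
      (e1 : c * u 1 + d * v 1 = w 1) : 1 ≤ c * a + d * b :=
    h c d hc hd (ext2 (by simpa using e0) (by simpa using e1))
  suffices ∃ s t : ℝ, s * u 0 + t * u 1 ≤ a ∧ s * v 0 + t * v 1 ≤ b ∧ 1 ≤ s * w 0 + t * w 1 by
    obtain ⟨s, t, hst⟩ := this
    exact ⟨![s, t], by simpa [dotProduct, Fin.sum_univ_two] using hst⟩
  by_cases hD : u 0 * v 1 - u 1 * v 0 = 0
  · by_cases hu : u 0 * w 1 - u 1 * w 0 = 0
    · by_cases hv : v 0 * w 1 - v 1 * w 0 = 0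
      · have hn : 0 < w 0 ^ 2 + w 1 ^ 2 := by
          by_contra! hn
          refine hw (ext2 ?_ ?_) <;> simp <;> nlinarith [sq_nonneg (w 0), sq_nonneg (w 1)]
        set n := w 0 ^ 2 + w 1 ^ 2 with hn'
        have one_side (u : Pt) (a : ℝ) (ha : 0 ≤ a) (hu : u 0 * w 1 - u 1 * w 0 = 0)
            (hp : ∀ c : ℝ, 0 ≤ c → c * u 0 = w 0 → c * u 1 = w 1 → 1 ≤ c * a) :
            w 0 / n * u 0 + w 1 / n * u 1 ≤ a := by
          set e := w 0 / n * u 0 + w 1 / n * u 1 with he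
          rcases le_or_gt e 0 with h0 | h0
          · exact h0.trans ha
          · have hu0 : u 0 = e * w 0 := by
              rw [he]; field_simp; rw [hn']; linear_combination (w 1) * hu
            have hu1 : u 1 = e * w 1 := by
              rw [he]; field_simp; rw [hn']; linear_combination (-w 0) * hu
            have := hp e⁻¹ (by positivity) (by rw [hu0]; field_simp) (by rw [hu1]; field_simp)
            rw [inv_mul_eq_div, le_div_iff₀ h0] at this
            linarith
        refine ⟨w 0 / n, w 1 / n, one_side u a ha hu fun c hc e0 e1 => ?_,
          one_side v b hb hv fun c hc e0 e1 => ?_, le_of_eq ?_⟩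
        · simpa using h' c 0 hc le_rfl (by simpa using e0) (by simpa using e1)
        · simpa using h' 0 c le_rfl hc (by simpa using e0) (by simpa using e1)
        · field_simp; rw [hn']
      · set D := v 0 * w 1 - v 1 * w 0 with hD'
        refine ⟨-v 1 / D, v 0 / D, ?_, ?_, ?_⟩
        · have : -v 1 / D * u 0 + v 0 / D * u 1 = 0 := by field_simp; linarith
          linarith
        · have : -v 1 / D * v 0 + v 0 / D * v 1 = 0 := by field_simp; ring
          linarith
        · apply le_of_eq; field_simp; rw [hD']; ring
    · set D := u 0 * w 1 - u 1 * w 0 with hD'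
      refine ⟨-u 1 / D, u 0 / D, ?_, ?_, ?_⟩
      · have : -u 1 / D * u 0 + u 0 / D * u 1 = 0 := by field_simp; ring
        linarith
      · have : -u 1 / D * v 0 + u 0 / D * v 1 = 0 := by field_simp; linarith
        linarith
      · apply le_of_eq; field_simp; rw [hD']; ring
  · set D := u 0 * v 1 - u 1 * v 0 with hD'
    set c := (w 0 * v 1 - w 1 * v 0) / D with hc
    set d := (u 0 * w 1 - u 1 * w 0) / D with hd
    rcases lt_or_ge c 0 with hc0 | hc0
    · have hc0' : w 0 * v 1 - w 1 * v 0 ≠ 0 := by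
        rintro h0; rw [hc, h0] at hc0; simp at hc0
      refine ⟨v 1 / (D * c), -v 0 / (D * c), ?_, ?_, ?_⟩
      · have : v 1 / (D * c) * u 0 + -v 0 / (D * c) * u 1 = c⁻¹ := by
          have := hc0.ne; field_simp; rw [hD']; ring
        rw [this]; exact (inv_nonpos.2 hc0.le).trans ha
      · have : v 1 / (D * c) * v 0 + -v 0 / (D * c) * v 1 = 0 := by ring
        linarith
      · have hDc : D * c = w 0 * v 1 - w 1 * v 0 := by rw [hc]; field_simp
        rw [hDc]; apply le_of_eq
        rw [div_mul_eq_mul_div, div_mul_eq_mul_div, ← add_div, eq_div_iff hc0']; ring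
    rcases lt_or_ge d 0 with hd0 | hd0
    · have hd0' : u 0 * w 1 - u 1 * w 0 ≠ 0 := by
        rintro h0; rw [hd, h0] at hd0; simp at hd0
      refine ⟨-u 1 / (D * d), u 0 / (D * d), ?_, ?_, ?_⟩
      · have : -u 1 / (D * d) * u 0 + u 0 / (D * d) * u 1 = 0 := by ring
        linarith
      · have : -u 1 / (D * d) * v 0 + u 0 / (D * d) * v 1 = d⁻¹ := by
          have := hd0.ne; field_simp; rw [hD']; ring
        rw [this]; exact (inv_nonpos.2 hd0.le).trans hb
      · have hDd : D * d = u 0 * w 1 - u 1 * w 0 := by rw [hd]; field_simp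
        rw [hDd]; apply le_of_eq; field_simp; ring
    · have := h' c d hc0 hd0 (by rw [hc, hd]; field_simp; rw [hD']; ring)
        (by rw [hc, hd]; field_simp; rw [hD']; ring)
      refine ⟨(a * v 1 - b * u 1) / D, (b * u 0 - a * v 0) / D, ?_, ?_, ?_⟩
      · apply le_of_eq; field_simp; rw [hD']; ring
      · apply le_of_eq; field_simp; rw [hD']; ring
      · convert this using 1
        rw [hc, hd]; field_simp; ring

/-- In the plane, an inequality with nonnegative coefficients holds for all conic representations
of `w ≠ 0` as soon as it holds for those using at most two rays. -/
lemma one_le_sum_of_pairs {ι : Type*} [Fintype ι] {r : ι → Pt} {α : ι → ℝ} (hα : ∀ i, 0 ≤ α i)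
    {w : Pt} (hw : w ≠ 0)
    (h : ∀ i j, ∀ c d : ℝ, 0 ≤ c → 0 ≤ d → c • r i + d • r j = w → 1 ≤ c * α i + d * α j)
    {s : ι → ℝ} (hs : ∀ i, 0 ≤ s i) (hsw : ∑ i, s i • r i = w) :
    1 ≤ ∑ i, α i * s i := by
  classical
  let F : Option ι → Set Pt := fun o => o.elim {y | 1 ≤ y ⬝ᵥ w} (fun i => {y | y ⬝ᵥ r i ≤ α i})
  have hlin (x : Pt) : IsLinearMap ℝ (fun y : Pt => y ⬝ᵥ x) :=
    ⟨fun a b => add_dotProduct a b x, fun c a => smul_dotProduct c a x⟩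
  have hne : (⋂ o ∈ (Finset.univ : Finset (Option ι)), F o).Nonempty := by
    refine Convex.helly_theorem' (𝕜 := ℝ) ?_ ?_
    · rintro (_ | i) -
      · exact convex_halfSpace_ge (hlin w) 1
      · exact convex_halfSpace_le (hlin (r i)) (α i)
    · intro I _ hI
      by_cases hN : none ∈ I
      · have hcard : (Finset.eraseNone I).card ≤ 2 := by
          rw [Finset.card_eraseNone_of_mem hN]
          simp only [Module.finrank_fin_fun] at hI
          omega
        have : ∃ y : Pt, (∀ i ∈ Finset.eraseNone I, y ⬝ᵥ r i ≤ α i) ∧ 1 ≤ y ⬝ᵥ w := by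
          have hpair (i j : ι) := exists_dual_of_pair hw (hα i) (hα j) (h i j)
          have hsub : ∃ i j, Finset.eraseNone I ⊆ {i, j} := by
            obtain ⟨i₀⟩ : Nonempty ι := by
              by_contra hemp
              rw [not_nonempty_iff] at hemp
              exact hw (by simpa using hsw.symm)
            rcases (show (Finset.eraseNone I).card = 0 ∨ (Finset.eraseNone I).card = 1 ∨
              (Finset.eraseNone I).card = 2 by omega) with h0 | h1 | h2
            · exact ⟨i₀, i₀, by simp [Finset.card_eq_zero.1 h0]⟩
            · obtain ⟨i, hi⟩ := Finset.card_eq_one.1 h1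
              exact ⟨i, i, by simp [hi]⟩
            · obtain ⟨i, j, -, hij⟩ := Finset.card_eq_two.1 h2
              exact ⟨i, j, hij.subset⟩
          obtain ⟨i, j, hE⟩ := hsub
          obtain ⟨y, h1, h2, h3⟩ := hpair i j
          refine ⟨y, fun l hl => ?_, h3⟩
          have := hE hl
          simp only [Finset.mem_insert, Finset.mem_singleton] at this
          rcases this with rfl | rfl <;> assumption
        obtain ⟨y, hy, hyw⟩ := this
        refine ⟨y, Set.mem_iInter₂.2 ?_⟩
        rintro (_ | i) hi
        · exact hyw
        · exact hy i (Finset.mem_eraseNone.2 hi)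
      · refine ⟨0, Set.mem_iInter₂.2 ?_⟩
        rintro (_ | i) hi
        · exact absurd hi hN
        · simpa [F] using hα i
  obtain ⟨y, hy⟩ := hne
  simp only [Finset.mem_univ, Set.iInter_true, Set.mem_iInter] at hy
  calc (1 : ℝ) ≤ y ⬝ᵥ w := hy none
    _ = ∑ i, s i * (y ⬝ᵥ r i) := by
      rw [← hsw, dotProduct_sum]; simp [dotProduct_smul]
    _ ≤ ∑ i, α i * s i := Finset.sum_le_sum fun i _ => by
      rw [mul_comm (α i)]; exact mul_le_mul_of_nonneg_left (hy (some i)) (hs i)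

/-! ### Dimension of the mixed-integer hull -/

/-- The parametrization `s ↦ (R s, s)` of the linear relaxation, translated to the origin. -/
noncomputable def graphMap {k : ℕ} (r : Fin k → Pt) : (Fin k → ℝ) →ₗ[ℝ] Pt × (Fin k → ℝ) :=
  (Fintype.linearCombination ℝ r).prod LinearMap.id

lemma graphMap_apply {k : ℕ} (r : Fin k → Pt) (s : Fin k → ℝ) :
    graphMap r s = (∑ i, s i • r i, s) := by
  simp [graphMap, Fintype.linearCombination_apply]

lemma graphMap_injective {k : ℕ} (r : Fin k → Pt) : Function.Injective (graphMap r) := by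
  intro s t h
  simpa [graphMap_apply] using congrArg Prod.snd h

lemma affDim_eq_finrank_vectorSpan {V : Type*} [AddCommGroup V] [Module ℝ V] (S : Set V) :
    affDim S = Module.finrank ℝ (vectorSpan ℝ S) := by
  rw [affDim, direction_affineSpan]

lemma affDim_convexHull {V : Type*} [AddCommGroup V] [Module ℝ V] (S : Set V) :
    affDim (convexHull ℝ S) = affDim S := by
  rw [affDim, affineSpan_convexHull, affDim]

lemma sub_eq_graphMap {k : ℕ} {r : Fin k → Pt} {f : Pt} {p q : Pt × (Fin k → ℝ)}
    (hp : p ∈ mixedP k r f) (hq : q ∈ mixedP k r f) : p - q = graphMap r (p.2 - q.2) := by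
  rw [graphMap_apply]
  ext1
  · simp [hp.2.2, hq.2.2, sub_smul, Finset.sum_sub_distrib]
  · simp

lemma vectorSpan_mixedP {k : ℕ} {r : Fin k → Pt} {f : Pt} (hr : ∀ i, IsRatPt (r i))
    (hne : (mixedP k r f).Nonempty) :
    vectorSpan ℝ (mixedP k r f) = LinearMap.range (graphMap r) := by
  apply le_antisymm
  · rw [vectorSpan, Submodule.span_le]
    rintro _ ⟨p, hp, q, hq, rfl⟩
    exact ⟨_, (sub_eq_graphMap hp hq).symm⟩
  · rw [LinearMap.range_eq_map, ← (Pi.basisFun ℝ (Fin k)).span_eq, Submodule.map_span,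
      Submodule.span_le]
    rintro _ ⟨_, ⟨i, rfl⟩, rfl⟩
    obtain ⟨N, hN, hi⟩ := (hr i).exists_nat_smul
    obtain ⟨p, hp⟩ := hne
    have hN' : (0 : ℝ) < N := by exact_mod_cast hN
    have hg : graphMap r (Pi.basisFun ℝ (Fin k) i) = (r i, Pi.single i 1) := by
      simp [graphMap_apply, Pi.single_apply, ite_smul]
    have hmem : p + (N : ℝ) • graphMap r (Pi.basisFun ℝ (Fin k) i) ∈ mixedP k r f := by
      rw [hg]
      refine ⟨hp.1.add hi, fun j => ?_, ?_⟩
      · have := hp.2.1 j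
        have h2 : (0 : ℝ) ≤ (Pi.single i 1 : Fin k → ℝ) j := by
          rw [Pi.single_apply]; split_ifs <;> norm_num
        simp only [Prod.snd_add, Prod.smul_snd, Pi.add_apply, Pi.smul_apply, smul_eq_mul]
        positivity
      · simp [add_smul, Finset.sum_add_distrib, hp.2.2, Pi.single_apply, ite_smul, add_assoc]
    have := vsub_mem_vectorSpan ℝ hmem hp
    rw [vsub_eq_sub, add_sub_cancel_left] at this
    rw [SetLike.mem_coe]
    exact (Submodule.smul_mem_iff _ hN'.ne').1 this

lemma affDim_convexHull_mixedP {k : ℕ} {r : Fin k → Pt} {f : Pt} (hr : ∀ i, IsRatPt (r i))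
    (hne : (mixedP k r f).Nonempty) : affDim (convexHull ℝ (mixedP k r f)) = k := by
  rw [affDim_convexHull, affDim_eq_finrank_vectorSpan, vectorSpan_mixedP hr hne,
    LinearMap.finrank_range_of_inj (graphMap_injective r)]
  simp

lemma vectorSpan_closure_convexHull_mixedP_le {k : ℕ} {r : Fin k → Pt} {f : Pt} :
    vectorSpan ℝ (closure (convexHull ℝ (mixedP k r f))) ≤ LinearMap.range (graphMap r) := by
  have hsub : closure (convexHull ℝ (mixedP k r f)) ⊆
      {p | p.1 = f + Fintype.linearCombination ℝ r p.2} := by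
    refine closure_minimal (convexHull_min (fun p hp => ?_) ?_) ?_
    · simpa [Fintype.linearCombination_apply] using hp.2.2
    · intro p hp q hq a b _ _ hab
      simp only [Set.mem_ofPred_eq] at hp hq
      simp only [Set.mem_ofPred_eq, Prod.fst_add, Prod.smul_fst, Prod.snd_add, Prod.smul_snd,
        map_add, map_smul, hp, hq, smul_add]
      rw [add_add_add_comm, ← add_smul, hab, one_smul]
    · refine isClosed_eq continuous_fst (continuous_const.add ?_)
      exact (LinearMap.continuous_of_finiteDimensional _).comp continuous_snd
  rw [vectorSpan, Submodule.span_le]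
  rintro _ ⟨p, hp, q, hq, rfl⟩
  refine ⟨p.2 - q.2, ?_⟩
  have h1 := hsub hp
  have h2 := hsub hq
  simp only [Set.mem_ofPred_eq, Fintype.linearCombination_apply] at h1 h2
  rw [graphMap_apply]
  ext1
  · simp [h1, h2, sub_smul, Finset.sum_sub_distrib]
  · simp

/-! ### Lifting to an additional ray -/

/-- The embedding `(x, s) ↦ (x, (s, 0))`. -/
noncomputable def snocZero (k : ℕ) : Pt × (Fin k → ℝ) →ₗ[ℝ] Pt × (Fin (k + 1) → ℝ) where
  toFun p := (p.1, Fin.snoc p.2 0)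
  map_add' p q := by
    ext1
    · rfl
    · funext i
      induction i using Fin.lastCases <;> simp
  map_smul' c p := by
    ext1
    · rfl
    · funext i
      induction i using Fin.lastCases <;> simp

lemma snocZero_apply (k : ℕ) (p : Pt × (Fin k → ℝ)) :
    snocZero k p = (p.1, (Fin.snoc p.2 0 : Fin (k + 1) → ℝ)) := rfl

lemma snocZero_injective (k : ℕ) : Function.Injective (snocZero k) := by
  intro p q h
  rw [snocZero_apply, snocZero_apply] at h
  ext1
  · exact (Prod.mk.inj h).1
  · funext i
    simpa using congrFun (Prod.mk.inj h).2 i.castSucc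

lemma snocZero_mem_mixedP {k : ℕ} {r : Fin k → Pt} {f rnew : Pt} {p : Pt × (Fin k → ℝ)}
    (hp : p ∈ mixedP k r f) : snocZero k p ∈ mixedP (k + 1) (Fin.snoc r rnew) f := by
  refine ⟨hp.1, fun i => ?_, ?_⟩
  · induction i using Fin.lastCases with
    | last => simp [snocZero_apply]
    | cast i => simpa [snocZero_apply] using hp.2.1 i
  · simp [snocZero_apply, Fin.sum_univ_castSucc, hp.2.2]

lemma snocZero_mem_closure {k : ℕ} {r : Fin k → Pt} {f rnew : Pt} {p : Pt × (Fin k → ℝ)}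
    (hp : p ∈ closure (convexHull ℝ (mixedP k r f))) :
    snocZero k p ∈ closure (convexHull ℝ (mixedP (k + 1) (Fin.snoc r rnew) f)) := by
  have hc : Continuous (snocZero k) := LinearMap.continuous_of_finiteDimensional _
  refine closure_mono ?_ (image_closure_subset_closure_image hc ⟨p, hp, rfl⟩)
  rw [LinearMap.image_convexHull]
  apply convexHull_mono
  rintro _ ⟨q, hq, rfl⟩
  exact snocZero_mem_mixedP hq

/-- A valid trivial lifting of a facet which is tight at a point using the new ray is a facet. -/
lemma IsFacet.snoc {k : ℕ} (hk : 2 ≤ k) {r : Fin k → Pt} {f rnew : Pt} {α : Fin k → ℝ} {a : ℝ}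
    (hr : ∀ i, IsRatPt (r i)) (hrnew : IsRatPt rnew) (hne : (mixedP k r f).Nonempty)
    (hfacet : IsFacet k r f α 1) (ha : 0 < a)
    (hvalid : ValidIneq (k + 1) (Fin.snoc r rnew) f (Fin.snoc α a) 1)
    {p : Pt × (Fin (k + 1) → ℝ)} (hp : p ∈ mixedP (k + 1) (Fin.snoc r rnew) f)
    (hp0 : p.2 (Fin.last k) ≠ 0)
    (htight : ∑ i, (Fin.snoc α a : Fin (k + 1) → ℝ) i * p.2 i = 1) :
    IsFacet (k + 1) (Fin.snoc r rnew) f (Fin.snoc α a) 1 := by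
  have hr' : ∀ i, IsRatPt ((Fin.snoc r rnew : Fin (k + 1) → Pt) i) := by
    intro i
    induction i using Fin.lastCases with
    | last => simpa using hrnew
    | cast i => simpa using hr i
  refine ⟨hvalid, ?_⟩
  obtain ⟨-, hdim⟩ := hfacet
  rw [affDim_convexHull_mixedP hr hne, affDim_eq_finrank_vectorSpan] at hdim
  rw [affDim_convexHull_mixedP hr' ⟨p, hp⟩, affDim_eq_finrank_vectorSpan]
  set F := {p ∈ closure (convexHull ℝ (mixedP k r f)) | ∑ i, α i * p.2 i = 1} with hF
  set F' := {p ∈ closure (convexHull ℝ (mixedP (k + 1) (Fin.snoc r rnew) f)) |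
    ∑ i, (Fin.snoc α a : Fin (k + 1) → ℝ) i * p.2 i = 1} with hF'
  have hpF : p ∈ F' := ⟨subset_closure (subset_convexHull ℝ _ hp), htight⟩
  have hFF : snocZero k '' F ⊆ F' := by
    rintro _ ⟨q, ⟨hq, hq1⟩, rfl⟩
    refine ⟨snocZero_mem_closure hq, ?_⟩
    simpa [snocZero_apply, Fin.sum_univ_castSucc] using hq1
  have hFne : F.Nonempty := by
    by_contra h
    rw [Set.not_nonempty_iff_eq_empty] at h
    rw [h, vectorSpan_empty, finrank_bot] at hdim
    omega
  obtain ⟨q, hq⟩ := hFne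
  have hlow : Module.finrank ℝ (vectorSpan ℝ F) < Module.finrank ℝ (vectorSpan ℝ F') := by
    rw [((vectorSpan ℝ F).equivMapOfInjective _ (snocZero_injective k)).finrank_eq]
    apply Submodule.finrank_lt_finrank_of_lt
    refine lt_of_le_of_ne ?_ ?_
    · rw [vectorSpan, vectorSpan, Submodule.map_span, Submodule.span_le]
      rintro _ ⟨_, ⟨x, hx, y, hy, rfl⟩, rfl⟩
      change snocZero k (x - y) ∈ _
      rw [map_sub]
      exact vsub_mem_vectorSpan ℝ (hFF ⟨x, hx, rfl⟩) (hFF ⟨y, hy, rfl⟩)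
    · intro heq
      have hmem : p - snocZero k q ∈ vectorSpan ℝ F' :=
        vsub_mem_vectorSpan ℝ hpF (hFF ⟨q, hq, rfl⟩)
      rw [← heq] at hmem
      obtain ⟨x, -, hx⟩ := hmem
      have := congrFun (congrArg Prod.snd hx) (Fin.last k)
      simp [snocZero_apply] at this
      exact hp0 this.symm
  have hup : Module.finrank ℝ (vectorSpan ℝ F') < k + 1 := by
    have hcard : Module.finrank ℝ
        (LinearMap.range (graphMap (Fin.snoc r rnew : Fin (k + 1) → Pt))) = k + 1 := by
      rw [LinearMap.finrank_range_of_inj (graphMap_injective _)]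
      simp
    refine lt_of_lt_of_eq (Submodule.finrank_lt_finrank_of_lt ?_) hcard
    refine lt_of_le_of_ne ((vectorSpan_mono ℝ (Set.sep_subset _ _)).trans
      vectorSpan_closure_convexHull_mixedP_le) ?_
    intro heq
    have hmem : graphMap (Fin.snoc r rnew : Fin (k + 1) → Pt) (Pi.single (Fin.last k) 1) ∈
        vectorSpan ℝ F' := heq ▸ LinearMap.mem_range_self _ _
    let φ : Pt × (Fin (k + 1) → ℝ) →ₗ[ℝ] ℝ :=
      (Fintype.linearCombination ℝ (Fin.snoc α a : Fin (k + 1) → ℝ)).comp (LinearMap.snd ℝ _ _)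
    have hφ : vectorSpan ℝ F' ≤ LinearMap.ker φ := by
      rw [vectorSpan, Submodule.span_le]
      rintro _ ⟨x, hx, y, hy, rfl⟩
      have h (z) (hz : z ∈ F') : φ z = 1 := by
        have := hz.2
        simpa [φ, Fintype.linearCombination_apply, mul_comm] using this
      simp [h x hx, h y hy]
    have := hφ hmem
    rw [LinearMap.mem_ker, graphMap_apply] at this
    simp [φ, Fintype.linearCombination_apply, Pi.single_apply] at this
    exact ha.ne' this
  have hdim' : Module.finrank ℝ (vectorSpan ℝ F) + 1 = k := hdim
  have hres : Module.finrank ℝ (vectorSpan ℝ F') + 1 = k + 1 := by omega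
  exact hres

/-! ### Consequences of not being contained in a split set -/

lemma one_le_of_pair {k : ℕ} {r : Fin k → Pt} {f : Pt} {α : Fin k → ℝ}
    (hvalid : ValidIneq k r f α 1) {i j : Fin k} {c d : ℝ} (hc : 0 ≤ c) (hd : 0 ≤ d)
    (hint : IsIntPt (f + c • r i + d • r j)) : 1 ≤ c * α i + d * α j := by
  have := hvalid (f + c • r i + d • r j, Pi.single i c + Pi.single j d) ⟨hint, fun l => ?_, ?_⟩
  · simpa [mul_add, Finset.sum_add_distrib, Pi.single_apply, mul_comm] using this
  · simp only [Pi.add_apply, Pi.single_apply]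
    split_ifs <;> positivity
  · simp [add_smul, Finset.sum_add_distrib, Pi.single_apply, ite_smul, add_assoc]

/-- If `L_α` lies in no split set, then some ray reaches, strictly inside `L_α`, an integral level
of any integer form which is not integral at `f`. -/
lemma exists_ray_level {k : ℕ} {r : Fin k → Pt} {f : Pt} {α : Fin k → ℝ}
    (hnotsplit : ¬ ∃ T : Set Pt, IsSplitSet T ∧ inducedSet k r f α ⊆ T)
    {p q : ℤ} (hpq : IsCoprime p q) (hf : ∀ m : ℤ, conormal p q f ≠ m) :
    ∃ (j : Fin k) (c : ℝ) (m : ℤ), 0 ≤ c ∧ α j * c < 1 ∧ conormal p q (f + c • r j) = m := by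
  by_contra! hcon
  set L := conormal p q with hL
  set z := ⌊L f⌋ with hz
  have h1 : (z : ℝ) < L f := lt_of_le_of_ne (Int.floor_le _) (hf z).symm
  have h2 : L f < z + 1 := Int.lt_floor_add_one _
  have hcon' (j : Fin k) (c : ℝ) (hc : 0 ≤ c) (hcα : α j * c < 1) (m : ℤ) :
      L f + c * L (r j) ≠ m := by
    have := hcon j c m hc hcα
    rwa [map_add, map_smul, smul_eq_mul] at this
  have hup (j : Fin k) (hj : 0 < L (r j)) : L (r j) ≤ α j * (z + 1 - L f) := by
    have hnn : 0 ≤ (z + 1 - L f) / L (r j) := div_nonneg (by linarith) hj.le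
    by_contra! hlt
    refine hcon' j _ hnn ?_ (z + 1) ?_
    · rw [← mul_div_assoc, div_lt_one hj]; exact hlt
    · rw [div_mul_cancel₀ _ hj.ne']; push_cast; ring
  have hdown (j : Fin k) (hj : L (r j) < 0) : -L (r j) ≤ α j * (L f - z) := by
    have hnn : 0 ≤ (L f - z) / -L (r j) := div_nonneg (by linarith) (by linarith)
    by_contra! hlt
    refine hcon' j _ hnn ?_ z ?_
    · rw [← mul_div_assoc, div_lt_one (by linarith)]; exact hlt
    · have := hj.ne; field_simp; ring
  apply hnotsplit
  refine ⟨_, ⟨![-q, p], z, ?_, rfl⟩, ?_⟩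
  · intro h0
    have hq : q = 0 := by simpa using congrFun h0 0
    have hp : p = 0 := by simpa using congrFun h0 1
    subst hp hq
    exact not_isCoprime_zero_zero hpq
  have hLsum (x : Pt) : ∑ j, ((![-q, p] j : ℤ) : ℝ) * x j = L x := by
    simp [hL, conormal_apply, Fin.sum_univ_two]; ring
  simp only [hLsum]
  have hhull : convexHull ℝ ({f} ∪ {x | ∃ i, 0 < α i ∧ x = f + (α i)⁻¹ • r i}) ⊆
      {x | (z : ℝ) ≤ L x} ∩ {x | L x ≤ z + 1} := by
    refine convexHull_min ?_ ((convex_halfSpace_ge L.isLinear _).inter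
      (convex_halfSpace_le L.isLinear _))
    rintro x (rfl | ⟨i, hi, rfl⟩)
    · exact ⟨h1.le, h2.le⟩
    · simp only [Set.mem_inter_iff, Set.mem_ofPred_eq, map_add, map_smul, smul_eq_mul]
      rw [inv_mul_eq_div]
      rcases lt_trichotomy (L (r i)) 0 with h | h | h
      · have := hdown i h
        have h3 : -L (r i) / α i ≤ L f - z := by rw [div_le_iff₀ hi]; linarith
        have h4 : L (r i) / α i ≤ 0 := div_nonpos_of_nonpos_of_nonneg h.le hi.le
        rw [neg_div] at h3
        constructor <;> linarith
      · rw [h, zero_div]; constructor <;> linarith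
      · have := hup i h
        have h3 : L (r i) / α i ≤ z + 1 - L f := by rw [div_le_iff₀ hi]; linarith
        have h4 : 0 ≤ L (r i) / α i := by positivity
        constructor <;> linarith
  rintro _ ⟨x, hx, y, ⟨n, c, v, hc, hv, rfl⟩, rfl⟩
  have hzero : L (∑ j, c j • v j) = 0 := by
    rw [map_sum]
    refine Finset.sum_eq_zero fun j _ => ?_
    obtain ⟨i, hi, hvi⟩ := hv j
    rw [map_smul, hvi]
    have : L (r i) = 0 := by
      by_contra hne
      rcases lt_or_gt_of_ne hne with h | h
      · have := hdown i h; rw [hi, zero_mul] at this; linarith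
      · have := hup i h; rw [hi, zero_mul] at this; linarith
    simp [this]
  have := hhull hx
  simpa [map_add, hzero] using this

lemma coeff_pos_of_not_split {k : ℕ} {r : Fin k → Pt} {f : Pt} {α : Fin k → ℝ}
    (hr : ∀ i, IsRatPt (r i)) (hr_ne : ∀ i, r i ≠ 0) (hα : ∀ i, 0 ≤ α i)
    (hvalid : ValidIneq k r f α 1)
    (hnotsplit : ¬ ∃ T : Set Pt, IsSplitSet T ∧ inducedSet k r f α ⊆ T) (i : Fin k) :
    0 < α i := by
  by_contra hi
  have hi0 : α i = 0 := le_antisymm (not_lt.1 hi) (hα i)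
  obtain ⟨p, q, e, hpq, he, hri⟩ := (hr i).exists_primitive (hr_ne i)
  have key : ∃ (j : Fin k) (c : ℝ) (m : ℤ), 0 ≤ c ∧ α j * c < 1 ∧
      conormal p q (f + c • r j) = m := by
    by_cases hf : ∃ m : ℤ, conormal p q f = m
    · obtain ⟨m, hm⟩ := hf
      exact ⟨i, 0, m, le_rfl, by simp, by simpa using hm⟩
    · push Not at hf
      exact exists_ray_level hnotsplit hpq hf
  obtain ⟨j, c, m, hc, hcα, hm⟩ := key
  obtain ⟨t, ht, hint⟩ := exists_isIntPt_add_smul hpq hm 0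
  have hsmul : t • intVec p q = (t / e) • r i := by
    rw [hri, smul_smul, div_mul_cancel₀ _ he.ne']
  rw [hsmul] at hint
  have := one_le_of_pair hvalid hc (div_nonneg ht.le he.le) hint
  rw [hi0, mul_zero, add_zero, mul_comm] at this
  linarith

/-! ### The lifting coefficient of the new ray -/

/-- Among the integer points `f + c rⁱ + d ρ` with `d > 0` that violate the inequality when `ρ` has
coefficient zero, some one requires the largest coefficient for `ρ`. -/
lemma exists_max_ratio {k : ℕ} {r : Fin k → Pt} {f : Pt} {α : Fin k → ℝ} (hα : ∀ i, 0 < α i)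
    (hnotsplit : ¬ ∃ T : Set Pt, IsSplitSet T ∧ inducedSet k r f α ⊆ T)
    {p q : ℤ} (hpq : IsCoprime p q) (hf : ∀ m : ℤ, conormal p q f ≠ m) :
    ∃ (i : Fin k) (c d : ℝ), 0 ≤ c ∧ 0 < d ∧ α i * c < 1 ∧
      IsIntPt (f + c • r i + d • intVec p q) ∧
      ∀ (j : Fin k) (c' d' : ℝ), 0 ≤ c' → 0 < d' → α j * c' < 1 →
        IsIntPt (f + c' • r j + d' • intVec p q) →
        (1 - α j * c') / d' ≤ (1 - α i * c) / d := by
  set ρ := intVec p q with hρ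
  let V : Fin k → Set (ℝ × ℝ) := fun i =>
    {x | 0 ≤ x.1 ∧ 0 < x.2 ∧ x.2 ≤ 1 ∧ α i * x.1 < 1 ∧ IsIntPt (f + x.1 • r i + x.2 • ρ)}
  have hV (i : Fin k) : (V i).Finite := by
    let B : ℝ := (∑ l, |f l|) + (α i)⁻¹ * (∑ l, |r i l|) + ∑ l, |ρ l|
    refine Set.Finite.of_finite_image (f := fun x : ℝ × ℝ => f + x.1 • r i + x.2 • ρ)
      ((finite_isIntPt_abs_le B).subset ?_) ?_
    · rintro _ ⟨⟨c, d⟩, ⟨hc, hd, hd1, hcα, hint⟩, rfl⟩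
      refine ⟨hint, fun l => ?_⟩
      have hc' : c ≤ (α i)⁻¹ := by
        rw [← one_div, le_div_iff₀ (hα i)]; linarith
      have single (x : Pt) : |x l| ≤ ∑ l, |x l| :=
        Finset.single_le_sum (f := fun l => |x l|) (fun _ _ => abs_nonneg _) (Finset.mem_univ l)
      calc |f l + c * r i l + d * ρ l| ≤ |f l| + |c * r i l| + |d * ρ l| := abs_add_three _ _ _
        _ = |f l| + c * |r i l| + d * |ρ l| := by
          rw [abs_mul, abs_mul, abs_of_nonneg hc, abs_of_pos hd]
        _ ≤ (∑ l, |f l|) + (α i)⁻¹ * (∑ l, |r i l|) + 1 * ∑ l, |ρ l| := by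
          have := hα i
          gcongr
          exacts [single f, single (r i), single ρ]
        _ = B := by simp [B]
    · rintro ⟨c, d⟩ ⟨hc, hd, hd1, hcα, hint⟩ ⟨c', d'⟩ - heq
      simp only at heq hint
      have hne : conormal p q (r i) ≠ 0 := by
        intro h0
        obtain ⟨m, hm⟩ := hint.conormal p q
        apply hf m
        rw [← hm, map_add, map_add, map_smul, map_smul, h0, hρ, conormal_intVec]
        simp
      have h1 := congrArg (conormal p q) heq
      simp only [map_add, map_smul, hρ, conormal_intVec, smul_eq_mul, mul_zero, add_zero,
        add_right_inj] at h1
      have hcc : c = c' := mul_right_cancel₀ hne h1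
      subst hcc
      have h2 : d • ρ = d' • ρ := add_left_cancel heq
      have hdd : d = d' := smul_left_injective ℝ (intVec_ne_zero hpq) h2
      rw [hdd]
  have hred (i : Fin k) (c d : ℝ) (hc : 0 ≤ c) (hd : 0 < d) (hcα : α i * c < 1)
      (hint : IsIntPt (f + c • r i + d • ρ)) :
      ∃ d₀, d₀ ≤ d ∧ (c, d₀) ∈ V i := by
    have h1 := Int.ceil_lt_add_one d
    have h2 := Int.le_ceil d
    have h3 : (1 : ℝ) ≤ ⌈d⌉ := by exact_mod_cast Int.one_le_ceil_iff.2 hd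
    refine ⟨d - (⌈d⌉ - 1), by linarith, hc, by simp only; linarith, by simp only; linarith, hcα, ?_⟩
    have := hint.add ((isIntPt_intVec p q).zsmul (1 - ⌈d⌉))
    convert this using 1
    rw [← hρ]
    push_cast
    module
  let W : Set (Σ _ : Fin k, ℝ × ℝ) := {x | x.2 ∈ V x.1}
  have hW : W.Finite := by
    refine (Set.finite_iUnion fun i => (hV i).image (Sigma.mk i)).subset ?_
    rintro ⟨i, x⟩ hx
    exact Set.mem_iUnion.2 ⟨i, x, hx, rfl⟩
  have hWne : W.Nonempty := by
    obtain ⟨j, c, m, hc, hcα, hm⟩ := exists_ray_level hnotsplit hpq hf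
    obtain ⟨t, ht, hint⟩ := exists_isIntPt_add_smul hpq hm 0
    obtain ⟨d₀, -, hd₀⟩ := hred j c t hc ht hcα hint
    exact ⟨⟨j, c, d₀⟩, hd₀⟩
  obtain ⟨⟨i, c, d⟩, ⟨hc, hd, hd1, hcα, hint⟩, hmax⟩ :=
    W.exists_max_image (fun x => (1 - α x.1 * x.2.1) / x.2.2) hW hWne
  refine ⟨i, c, d, hc, hd, hcα, hint, fun j c' d' hc' hd' hcα' hint' => ?_⟩
  obtain ⟨d₀, hle, hd₀⟩ := hred j c' d' hc' hd' hcα' hint'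
  refine le_trans ?_ (hmax ⟨j, c', d₀⟩ hd₀)
  exact div_le_div_of_nonneg_left (by linarith) hd₀.2.1 hle

/-- Validity of the lifted inequality. -/
lemma validIneq_snoc {k : ℕ} {r : Fin k → Pt} {f : Pt} {α : Fin k → ℝ} (hα : ∀ i, 0 ≤ α i)
    (hf_int : ¬ IsIntPt f) (hvalid : ValidIneq k r f α 1) {p q : ℤ}
    (hf : ∀ m : ℤ, conormal p q f ≠ m) {a : ℝ} (ha : 0 ≤ a)
    (hmax : ∀ (j : Fin k) (c d : ℝ), 0 ≤ c → 0 < d → α j * c < 1 →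
        IsIntPt (f + c • r j + d • intVec p q) → (1 - α j * c) / d ≤ a) :
    ValidIneq (k + 1) (Fin.snoc r (intVec p q)) f (Fin.snoc α a) 1 := by
  rintro ⟨x, s⟩ ⟨hx, hs, hxs⟩
  simp only at hx hs hxs
  have hw : x - f ≠ 0 := by
    intro h0
    rw [sub_eq_zero.1 h0] at hx
    exact hf_int hx
  have hmixed (j : Fin k) (c d : ℝ) (hc : 0 ≤ c) (hd : 0 ≤ d)
      (h : c • r j + d • intVec p q = x - f) : 1 ≤ c * α j + d * a := by
    have hint : IsIntPt (f + c • r j + d • intVec p q) := by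
      rw [add_assoc, h, add_sub_cancel]; exact hx
    rcases hd.eq_or_lt with rfl | hd
    · simpa using one_le_of_pair (i := j) (j := j) hvalid hc le_rfl (by simpa using hint)
    · by_cases hcα : α j * c < 1
      · have := hmax j c d hc hd hcα hint
        rw [div_le_iff₀ hd] at this
        linarith
      · have : 0 ≤ d * a := by positivity
        linarith
  refine one_le_sum_of_pairs (r := (Fin.snoc r (intVec p q) : Fin (k + 1) → Pt)) ?_ hw ?_ hs
    (by rw [hxs, add_sub_cancel_left])
  · intro i
    induction i using Fin.lastCases with
    | last => simpa using ha
    | cast i => simpa using hα i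
  · intro i j c d hc hd h
    induction i using Fin.lastCases with
    | last =>
      induction j using Fin.lastCases with
      | last =>
        simp only [Fin.snoc_last] at h
        obtain ⟨m, hm⟩ := hx.conormal p q
        refine absurd ?_ (hf m)
        have := congrArg (conormal p q) h
        simp only [map_add, map_smul, conormal_intVec, smul_zero, add_zero, map_sub] at this
        linarith
      | cast j =>
        simp only [Fin.snoc_last, Fin.snoc_castSucc] at h ⊢
        rw [add_comm] at h ⊢
        exact hmixed j d c hd hc h
    | cast i =>
      induction j using Fin.lastCases with
      | last =>
        simp only [Fin.snoc_last, Fin.snoc_castSucc] at h ⊢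
        exact hmixed i c d hc hd h
      | cast j =>
        simp only [Fin.snoc_castSucc] at h ⊢
        exact one_le_of_pair hvalid hc hd (by rw [add_assoc, h, add_sub_cancel]; exact hx)

/-! ### The lifted set is not of type `T¹` -/

/-- A non-integral point outside the hull of the other generators keeps the hull from being a
triangle of type `T¹`. -/
lemma not_isT1_of_notMem_convexHull {S : Set Pt} (hS : S.Finite) {v : Pt}
    (hv : v ∉ convexHull ℝ S) (hint : ¬ IsIntPt v) : ¬ IsT1 (convexHull ℝ (insert v S)) := by
  rintro ⟨w, -, hw, heq, -⟩
  obtain ⟨φ, u, hφv, hφS⟩ :=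
    geometric_hahn_banach_point_closed (convex_convexHull ℝ S) (hS.isClosed_convexHull ℝ) hv
  have hhalf : Convex ℝ {x | φ v < φ x} := convex_halfSpace_gt ⟨map_add φ, map_smul φ⟩ _
  have hconv : Convex ℝ {x | x = v ∨ φ v < φ x} := by
    intro x hx y hy a b ha hb hab
    rcases hx with rfl | hx
    · rcases hy with rfl | hy
      · left; rw [← add_smul, hab, one_smul]
      · rcases hb.eq_or_lt with rfl | hb
        · left; rw [add_zero] at hab; simp [hab]
        · right
          simp only [map_add, map_smul, smul_eq_mul]
          have : a = 1 - b := by linarith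
          subst this
          nlinarith
    · rcases hy with rfl | hy
      · rcases ha.eq_or_lt with rfl | ha
        · left; rw [zero_add] at hab; simp [hab]
        · right
          simp only [map_add, map_smul, smul_eq_mul]
          have : b = 1 - a := by linarith
          subst this
          nlinarith
      · exact Or.inr (hhalf hx hy ha hb hab)
  have hsub : convexHull ℝ (insert v S) ⊆ {x | x = v ∨ φ v < φ x} := by
    refine convexHull_min ?_ hconv
    rintro x (rfl | hx)
    · exact Or.inl rfl
    · exact Or.inr (hφv.trans (hφS x (subset_convexHull ℝ S hx)))
  have hrange : convexHull ℝ (Set.range w) ⊆ {x | φ v < φ x} := by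
    refine convexHull_min ?_ hhalf
    rintro _ ⟨i, rfl⟩
    have hmem : w i ∈ convexHull ℝ (insert v S) :=
      heq ▸ subset_convexHull ℝ _ (Set.mem_range_self i)
    rcases hsub hmem with h | h
    · exact absurd (h ▸ hw i) hint
    · exact h
  exact lt_irrefl (φ v) (hrange (heq ▸ subset_convexHull ℝ _ (Set.mem_insert v S)))

lemma exists_det_ne_zero {k : ℕ} {r : Fin k → Pt}
    (hdim : Module.finrank ℝ (Submodule.span ℝ (Set.range r)) = 2) :
    ∃ i j, r i 0 * r j 1 - r i 1 * r j 0 ≠ 0 := by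
  by_contra! hcon
  have hone : Module.finrank ℝ (Submodule.span ℝ (Set.range r)) ≤ 1 := by
    by_cases h0 : ∀ i, r i = 0
    · have : Set.range r ⊆ {0} := by rintro _ ⟨i, rfl⟩; exact h0 i
      rw [Submodule.span_eq_bot.2 fun x hx => this hx]
      simp
    · push Not at h0
      obtain ⟨i, hi⟩ := h0
      refine (Submodule.finrank_mono (t := Submodule.span ℝ {r i}) ?_).trans
        (finrank_span_singleton hi).le
      rw [Submodule.span_le]
      rintro _ ⟨j, rfl⟩
      rw [SetLike.mem_coe, Submodule.mem_span_singleton]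
      have hij := hcon i j
      by_cases h1 : r i 0 = 0
      · have h2 : r i 1 ≠ 0 := by
          intro h2
          apply hi
          funext l
          fin_cases l
          exacts [h1, h2]
        refine ⟨r j 1 / r i 1, funext fun l => ?_⟩
        fin_cases l
        · simp only [Fin.zero_eta, Pi.smul_apply, smul_eq_mul]; field_simp; linarith
        · simp only [Fin.mk_one, Pi.smul_apply, smul_eq_mul]; field_simp
      · refine ⟨r j 0 / r i 0, funext fun l => ?_⟩
        fin_cases l
        · simp only [Fin.zero_eta, Pi.smul_apply, smul_eq_mul]; field_simp
        · simp only [Fin.mk_one, Pi.smul_apply, smul_eq_mul]; field_simp; linarith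
  omega

/-- Two independent vectors together with a vector in the interior of the opposite cone generate
the plane. -/
lemma exists_nonneg_combination {u v w : Pt} (huv : u 0 * v 1 - u 1 * v 0 ≠ 0) {c d : ℝ}
    (hc : 0 < c) (hd : 0 < d) (h : c • u + d • v + w = 0) (x : Pt) :
    ∃ s t e : ℝ, 0 ≤ s ∧ 0 ≤ t ∧ 0 ≤ e ∧ x = s • u + t • v + e • w := by
  set D := u 0 * v 1 - u 1 * v 0 with hD
  set A := (x 0 * v 1 - x 1 * v 0) / D with hA
  set B := (u 0 * x 1 - u 1 * x 0) / D with hB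
  have hx : x = A • u + B • v := by
    funext j
    fin_cases j
    · simp only [Fin.zero_eta, Pi.add_apply, Pi.smul_apply, smul_eq_mul, hA, hB]
      field_simp; rw [hD]; ring
    · simp only [Fin.mk_one, Pi.add_apply, Pi.smul_apply, smul_eq_mul, hA, hB]
      field_simp; rw [hD]; ring
  set e := |A| / c + |B| / d with he
  have h1 : |A| ≤ e * c := by
    rw [he, add_mul, div_mul_cancel₀ _ hc.ne']
    have : 0 ≤ |B| / d * c := by positivity
    linarith
  have h2 : |B| ≤ e * d := by
    rw [he, add_mul, div_mul_cancel₀ _ hd.ne']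
    have : 0 ≤ |A| / c * d := by positivity
    linarith
  refine ⟨A + e * c, B + e * d, e, by linarith [neg_abs_le A], by linarith [neg_abs_le B],
    by positivity, ?_⟩
  have : x = A • u + B • v + e • (c • u + d • v + w) := by rw [h, smul_zero, add_zero, ← hx]
  rw [this]
  module

theorem extend_to_full_dimensional_cone (k : ℕ)
    (hk : 1 ≤ k)
    (r : Fin k → Pt) (f : Pt)
    (hr_rat : ∀ i, IsRatPt (r i)) (hr_ne : ∀ i, r i ≠ 0)
    (hf_rat : IsRatPt f) (hf_int : ¬ IsIntPt f)
    (hne : (mixedP k r f).Nonempty)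
    (α : Fin k → ℝ) (hα : ∀ i, 0 ≤ α i)
    (hfacet : IsFacet k r f α 1)
    (hnotsplit : ¬ ∃ T : Set Pt, IsSplitSet T ∧ inducedSet k r f α ⊆ T)
    (hdim : Module.finrank ℝ (Submodule.span ℝ (Set.range r)) = 2)
    (hnotfull : coneGen (Set.range r) ≠ Set.univ) :
    ∃ (rnew : Pt) (anew : ℝ), IsRatPt rnew ∧ rnew ≠ 0 ∧ 0 < anew ∧
      coneGen (Set.range (Fin.snoc r rnew : Fin (k + 1) → Pt)) = Set.univ ∧
      IsFacet (k + 1) (Fin.snoc r rnew) f (Fin.snoc α anew) 1 ∧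
      ¬ IsT1 (convexHull ℝ (Set.range fun i : Fin (k + 1) =>
          f + ((Fin.snoc α anew : Fin (k + 1) → ℝ) i)⁻¹ •
            (Fin.snoc r rnew : Fin (k + 1) → Pt) i)) := by
  obtain ⟨hvalid, -⟩ := id hfacet
  have hpos := coeff_pos_of_not_split hr_rat hr_ne hα hvalid hnotsplit
  obtain ⟨i, j, hij⟩ := exists_det_ne_zero hdim
  obtain ⟨p, q, c, d, hpq, hc, hd, hcd, hf⟩ :=
    exists_primitive_neg_cone (hr_rat i) (hr_rat j) hij hf_int
  obtain ⟨l, cl, dl, hcl, hdl, hclα, hint, hmax⟩ := exists_max_ratio (r := r) hpos hnotsplit hpq hf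
  have hcomb := exists_nonneg_combination hij hc hd hcd
  have hk2 : 2 ≤ k := by
    have := finrank_range_le_card (R := ℝ) r
    rw [Set.finrank, hdim] at this
    simpa using this
  have ha : 0 < (1 - α l * cl) / dl := div_pos (by linarith) hdl
  have hrat : IsRatPt (intVec p q) := fun m => by
    fin_cases m
    exacts [⟨p, by simp [intVec]⟩, ⟨q, by simp [intVec]⟩]
  refine ⟨intVec p q, (1 - α l * cl) / dl, hrat, intVec_ne_zero hpq, ha, ?_, ?_, ?_⟩
  · refine Set.eq_univ_of_forall fun x => ?_
    obtain ⟨s, t, e, hs, ht, he, hx⟩ := hcomb x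
    refine ⟨3, ![s, t, e], ![r i, r j, intVec p q], fun m => ?_, fun m => ?_, ?_⟩
    · fin_cases m
      exacts [hs, ht, he]
    · fin_cases m
      exacts [⟨i.castSucc, by simp⟩, ⟨j.castSucc, by simp⟩, ⟨Fin.last k, by simp⟩]
    · simpa [Fin.sum_univ_three] using hx
  · refine hfacet.snoc hk2 hr_rat hrat hne ha (validIneq_snoc hα hf_int hvalid hf ha.le hmax)
      (p := (f + cl • r l + dl • intVec p q, (Fin.snoc (Pi.single l cl) dl : Fin (k + 1) → ℝ)))
      ⟨hint, fun m => ?_, ?_⟩ ?_ ?_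
    · induction m using Fin.lastCases with
      | last => simpa using hdl.le
      | cast m =>
        simp only [Fin.snoc_castSucc, Pi.single_apply]
        split_ifs
        exacts [hcl, le_rfl]
    · simp [Fin.sum_univ_castSucc, Pi.single_apply, ite_smul, add_assoc]
    · simpa using hdl.ne'
    · simp [Fin.sum_univ_castSucc, Pi.single_apply]
      field_simp
      ring
  · set a := (1 - α l * cl) / dl with ha'
    have hrange : (Set.range fun m : Fin (k + 1) =>
        f + ((Fin.snoc α a : Fin (k + 1) → ℝ) m)⁻¹ •
          (Fin.snoc r (intVec p q) : Fin (k + 1) → Pt) m) =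
        insert (f + a⁻¹ • intVec p q) (Set.range fun m : Fin k => f + (α m)⁻¹ • r m) := by
      ext x
      simp only [Set.mem_range, Set.mem_insert_iff, Fin.exists_fin_succ', Fin.snoc_castSucc,
        Fin.snoc_last]
      rw [or_comm, eq_comm (a := x)]
    rw [hrange]
    refine not_isT1_of_notMem_convexHull (Set.finite_range _) ?_ ?_
    · intro hmem
      have hcone : convexHull ℝ (Set.range fun m : Fin k => f + (α m)⁻¹ • r m) ⊆
          {x | ∃ s : Fin k → ℝ, (∀ m, 0 ≤ s m) ∧ x = f + ∑ m, s m • r m} := by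
        refine convexHull_min ?_ ?_
        · rintro _ ⟨m, rfl⟩
          refine ⟨Pi.single m (α m)⁻¹, fun n => ?_, by simp [Pi.single_apply, ite_smul]⟩
          rw [Pi.single_apply]
          have := hpos m
          split_ifs <;> positivity
        · rintro _ ⟨s, hs, rfl⟩ _ ⟨t, ht, rfl⟩ a b ha hb hab
          refine ⟨a • s + b • t, fun m => ?_, ?_⟩
          · have := hs m
            have := ht m
            simp only [Pi.add_apply, Pi.smul_apply, smul_eq_mul]
            positivity
          · simp only [Pi.add_apply, Pi.smul_apply, smul_eq_mul, add_smul, mul_smul,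
              Finset.sum_add_distrib, smul_add, ← Finset.smul_sum]
            rw [add_add_add_comm, ← add_smul, hab, one_smul]
      obtain ⟨s, hs, hse⟩ := hcone hmem
      have hnew : intVec p q = ∑ m, (a * s m) • r m := by
        rw [← one_smul ℝ (intVec p q), ← mul_inv_cancel₀ ha.ne', mul_smul, add_left_cancel hse,
          Finset.smul_sum]
        simp [mul_smul]
      apply hnotfull
      refine Set.eq_univ_of_forall fun x => ?_
      obtain ⟨u, t, e, hu, ht, he, hx⟩ := hcomb x
      refine ⟨k, fun m => (Pi.single i u : Fin k → ℝ) m + (Pi.single j t : Fin k → ℝ) m +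
        e * (a * s m), r, fun m => ?_, fun m => Set.mem_range_self m, ?_⟩
      · have := hs m
        simp only [Pi.single_apply]
        split_ifs <;> positivity
      · rw [hx, hnew]
        simp [add_smul, Finset.sum_add_distrib, Pi.single_apply, ite_smul, mul_smul,
          Finset.smul_sum]
    · intro hbad
      obtain ⟨m, hm⟩ := hbad.conormal p q
      refine hf m ?_
      rwa [map_add, map_smul, conormal_intVec, smul_zero, add_zero] at hm
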